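/- For every n ≥ 1 and every k with 0 ≤ k ≤ n−1, γ_{n,n−k,k} equals the Eulerian number ⟨n,k⟩; that is, the number of Stirling permutations σ ∈ Q_n with lap(σ) = n−k, dasc(σ) = k and dp(σ) = 0 equals the number of permutations π of {1,…,n} with exactly k descents. -/

import Mathlib

open Finset MvPolynomial

/-- Stirling permutations of order `n`, encoded as functions `Fin (2*n) → Fin (n+1)`
in one-line notation (position `i` holds the letter `σ (i) ∈ {1,…,n}`), such that each
letter `1,…,n` occurs exactly twice and all entries between the two occurrences of a
letter are larger than that letter. -/
def StirlingSet (n : ℕ) : Finset (Fin (2*n) → Fin (n+1)) :=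
  Finset.univ.filter (fun σ =>
    (∀ v : Fin (n+1), (v : ℕ) ≠ 0 →
        (Finset.univ.filter (fun i => σ i = v)).card = 2) ∧
    (∀ i j k : Fin (2*n), i < j → j < k → σ i = σ k → σ i < σ j))

/-- The letter at position `i ∈ {1,…,2n}` of a Stirling permutation, with the
convention that positions outside this range (in particular position `0`) hold `0`. -/
def sval {n : ℕ} (σ : Fin (2*n) → Fin (n+1)) (i : ℕ) : ℕ :=
  if h : 1 ≤ i ∧ i ≤ 2*n then (σ ⟨i - 1, by omega⟩ : ℕ) else 0

/-- The number of ascent-plateaus: indices `2 ≤ i ≤ 2n-1` with `σ_{i-1} < σ_i = σ_{i+1}`. -/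
def apQ {n : ℕ} (σ : Fin (2*n) → Fin (n+1)) : ℕ :=
  ((Finset.Icc 2 (2*n - 1)).filter
    (fun i => sval σ (i-1) < sval σ i ∧ sval σ i = sval σ (i+1))).card

/-- The number of left ascent-plateaus: indices `1 ≤ i ≤ 2n-1` with
`σ_{i-1} < σ_i = σ_{i+1}`, where `σ_0 = 0`. -/
def lapQ {n : ℕ} (σ : Fin (2*n) → Fin (n+1)) : ℕ :=
  ((Finset.Icc 1 (2*n - 1)).filter
    (fun i => sval σ (i-1) < sval σ i ∧ sval σ i = sval σ (i+1))).card

/-- The number of double ascents: indices `1 ≤ i ≤ 2n-1` with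
`σ_{i-1} < σ_i < σ_{i+1}`, where `σ_0 = 0`. -/
def dascQ {n : ℕ} (σ : Fin (2*n) → Fin (n+1)) : ℕ :=
  ((Finset.Icc 1 (2*n - 1)).filter
    (fun i => sval σ (i-1) < sval σ i ∧ sval σ i < sval σ (i+1))).card

/-- The number of descent-plateaus: indices `2 ≤ i ≤ 2n-1` with
`σ_{i-1} > σ_i = σ_{i+1}`. -/
def dpQ {n : ℕ} (σ : Fin (2*n) → Fin (n+1)) : ℕ :=
  ((Finset.Icc 2 (2*n - 1)).filter
    (fun i => sval σ i < sval σ (i-1) ∧ sval σ i = sval σ (i+1))).card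

/-- The number of ascents: indices `1 ≤ i ≤ 2n-1` with `σ_i < σ_{i+1}` or `i = 1`. -/
def ascQ {n : ℕ} (σ : Fin (2*n) → Fin (n+1)) : ℕ :=
  ((Finset.Icc 1 (2*n - 1)).filter
    (fun i => sval σ i < sval σ (i+1) ∨ i = 1)).card

/-- The number of plateaus: indices `1 ≤ i ≤ 2n-1` with `σ_i = σ_{i+1}`. -/
def platQ {n : ℕ} (σ : Fin (2*n) → Fin (n+1)) : ℕ :=
  ((Finset.Icc 1 (2*n - 1)).filter (fun i => sval σ i = sval σ (i+1))).card

/-- The flag ascent-plateau number: `2·ap(σ)+1` if `σ_1 = σ_2`, and `2·ap(σ)` otherwise. -/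
def fapQ {n : ℕ} (σ : Fin (2*n) → Fin (n+1)) : ℕ :=
  if 1 ≤ n ∧ sval σ 1 = sval σ 2 then 2 * apQ σ + 1 else 2 * apQ σ

/-- `γ_{n,i,j}`: the number of Stirling permutations of order `n` with `lap = i`,
`dasc = j` and `dp = 0`. -/
def gammaNum (n i j : ℕ) : ℕ :=
  ((StirlingSet n).filter (fun σ => lapQ σ = i ∧ dascQ σ = j ∧ dpQ σ = 0)).card

/-- The value `π(i) ∈ {1,…,n}` at position `i ∈ {1,…,n}` of a permutation of `[n]`
in one-line notation (and `0` outside the range). -/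
def pval {n : ℕ} (π : Equiv.Perm (Fin n)) (i : ℕ) : ℕ :=
  if h : 1 ≤ i ∧ i ≤ n then (π ⟨i - 1, by omega⟩ : ℕ) + 1 else 0

/-- The number of descents of a permutation of `[n]`:
`#{i ∈ [n-1] : π(i) > π(i+1)}`. -/
def pdes {n : ℕ} (π : Equiv.Perm (Fin n)) : ℕ :=
  ((Finset.Icc 1 (n - 1)).filter (fun i => pval π (i + 1) < pval π i)).card

/-- The Eulerian number `⟨n,k⟩`: the number of permutations of `[n]` with
exactly `k` descents. -/
def eulerianNum (n k : ℕ) : ℕ :=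
  (Finset.univ.filter (fun π : Equiv.Perm (Fin n) => pdes π = k)).card

/-! Read a Stirling permutation `σ` from right to left, with `σ₀ = 0` following the last letter.
Then `lap σ + dasc σ` counts the letters larger than their successor, and `lap σ + dp σ` those
equal to their successor. Ascents and descent-plateaus of `σ` sit at first occurrences of distinct
letters, so `lap σ + dasc σ + dp σ ≤ n`, and `lap σ = n - k`, `dasc σ = k`, `dp σ = 0` together say
that the reversed word has the maximal number `n` of descents, and `n - k` plateaus.

The words with `n` descents are built uniquely from the permutations `l` of `1, …, n`: insert the
letters of `l` from the last to the first, each `v` in front and a second time as far to the right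
as the Stirling condition allows. A plateau arises exactly when `v` exceeds the letter following it
in `l`. As `0` follows the last letter of `l` too, the number of plateaus is `n` minus the number
of ascents of `l`, that is, `n` minus the number of descents of the reverse of `l`. -/

section Words

variable {α : Type*} [LinearOrder α] [OrderBot α]

/-- The number of letters `a` of the word `l` whose successor `b` satisfies `r a b`. The last
letter has successor `⊥`, so that for a word read from right to left this is the convention
`σ₀ = 0`. -/
def stepCount (r : α → α → Prop) [DecidableRel r] : List α → ℕ
  | [] => 0
  | a :: l => (if r a (l.headD ⊥) then 1 else 0) + stepCount r l

/-- The Stirling condition on words: all letters between two equal letters are larger. It is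
invariant under reversal. -/
def IsStirling (w : List α) : Prop :=
  w.Triplewise fun a b c => a = c → a < b

/-- `w` is a Stirling permutation of the multiset in which every element of `s` occurs twice. -/
structure IsStirlingPerm (s : Finset α) (w : List α) : Prop where
  coe_eq : (w : Multiset α) = 2 • s.val
  isStirling : IsStirling w

/-- The word obtained from `w` by putting one letter `v` in front and a second one behind the
longest initial run of letters of `w` larger than `v`, the last place that the Stirling condition
allows. -/
def insertPair (v : α) (w : List α) : List α :=
  v :: (w.takeWhile (v < ·) ++ v :: w.dropWhile (v < ·))

/-- For `l` without repetitions, the Stirling permutation with the most descents, in the sense of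
`stepCount (· > ·)`, whose letters in order of first occurrence are those of `l`. -/
def doubling (l : List α) : List α :=
  l.foldr insertPair []

section StepCount

variable {r : α → α → Prop} [DecidableRel r] {v : α} {A B : List α}

lemma stepCount_append (h : ∀ b ∈ B, r b (A.headD ⊥) ↔ r b ⊥) :
    stepCount r (B ++ A) = stepCount r B + stepCount r A := by
  induction B with
  | nil => simp only [List.nil_append, stepCount, zero_add]
  | cons b B ih =>
    rw [List.forall_mem_cons] at h
    rw [List.cons_append, stepCount, stepCount, ih h.2, add_assoc]
    cases B with
    | nil => exact congrArg (· + _) (if_congr h.1 rfl rfl)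
    | cons c B => rfl

lemma stepCount_gt_append (hB : ∀ b ∈ B, v < b) (hA : A.headD ⊥ < v) :
    stepCount (· > ·) (B ++ A) = stepCount (· > ·) B + stepCount (· > ·) A :=
  stepCount_append fun b hb =>
    iff_of_true (hA.trans (hB b hb)) (bot_le.trans_lt (hB b hb))

lemma stepCount_eq_append (hB : ∀ b ∈ B, v < b) (hA : A.headD ⊥ < v) :
    stepCount (· = ·) (B ++ A) = stepCount (· = ·) B + stepCount (· = ·) A :=
  stepCount_append fun b hb =>
    iff_of_false (hA.trans (hB b hb)).ne' (bot_le.trans_lt (hB b hb)).ne'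

lemma stepCount_gt_cons_append_cons (hB : ∀ b ∈ B, v < b) :
    stepCount (· > ·) (v :: (B ++ v :: A)) =
      stepCount (· > ·) B + stepCount (· > ·) A + if A.headD ⊥ < v then 1 else 0 := by
  have hv : ¬ (B ++ v :: A).headD ⊥ < v := by
    cases B with
    | nil => exact lt_irrefl v
    | cons b B => exact (hB b List.mem_cons_self).not_gt
  have hvB : ∀ b ∈ B, b > (v :: A).headD ⊥ ↔ b > ⊥ := fun b hb =>
    iff_of_true (hB b hb) (bot_le.trans_lt (hB b hb))
  simp only [stepCount, gt_iff_lt, if_neg hv, stepCount_append hvB]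
  ring

lemma stepCount_eq_cons_append_cons (hB : ∀ b ∈ B, v < b) (hA : A.headD ⊥ < v) :
    stepCount (· = ·) (v :: (B ++ v :: A)) =
      stepCount (· = ·) B + stepCount (· = ·) A + if B = [] then 1 else 0 := by
  have hv : v = (B ++ v :: A).headD ⊥ ↔ B = [] := by
    cases B with
    | nil => simp
    | cons b B => simpa using (hB b List.mem_cons_self).ne
  have hvB : ∀ b ∈ B, b = (v :: A).headD ⊥ ↔ b = ⊥ := fun b hb =>
    iff_of_false (hB b hb).ne' (bot_le.trans_lt (hB b hb)).ne'
  simp only [stepCount, hv, hA.ne', stepCount_append hvB, if_false]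
  ring

end StepCount

section IsStirling

variable {s : Finset α} {v : α} {A B w : List α}

omit [OrderBot α] in
lemma IsStirling.of_cons_append_cons (h : IsStirling (v :: (B ++ v :: A))) :
    IsStirling (B ++ A) := by
  grind [IsStirling, List.triplewise_append]

omit [OrderBot α] in
lemma IsStirling.lt_of_cons_append_cons (h : IsStirling (v :: (B ++ v :: A))) {b : α}
    (hb : b ∈ B) : v < b :=
  (List.pairwise_append.1 (List.triplewise_cons.1 h).1).2.2 b hb v List.mem_cons_self rfl

omit [OrderBot α] in
lemma IsStirling.disjoint_of_cons_append_cons (h : IsStirling (v :: (B ++ v :: A))) :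
    Disjoint B.toFinset A.toFinset := by
  have hBA := (List.triplewise_append.1 (List.triplewise_cons.1 h).2).2.2.1
  rw [Finset.disjoint_left]
  intro b hb ha
  rw [List.mem_toFinset] at hb ha
  have hbv : b < v := (List.pairwise_cons.1 (hBA b hb)).1 b ha rfl
  exact (h.lt_of_cons_append_cons hb).not_gt hbv

lemma IsStirling.notMem_of_headD_lt (h : IsStirling (v :: w)) (hv : w.headD ⊥ < v) : v ∉ w := by
  cases w with
  | nil => exact List.not_mem_nil
  | cons a w =>
    intro hmem
    have hvw : v ∈ w := (List.mem_cons.1 hmem).resolve_left hv.ne'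
    have hva : v < a := (List.pairwise_cons.1 (List.triplewise_cons.1 h).1).1 v hvw rfl
    exact hva.not_gt hv

lemma IsStirling.cons_append_cons (h : IsStirling (B ++ A)) (hB : ∀ b ∈ B, v < b)
    (hA : A.headD ⊥ < v) (hvA : v ∉ A) : IsStirling (v :: (B ++ v :: A)) := by
  obtain ⟨hBs, hAs, hBA, hAB⟩ := List.triplewise_append.1 h
  have hdisj : ∀ b ∈ B, b ∉ A := fun b hb =>
    IsStirling.notMem_of_headD_lt (List.triplewise_cons.2 ⟨hBA b hb, hAs⟩) (hA.trans (hB b hb))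
  have hvB : v ∉ B := fun hv => (hB v hv).false
  have hvtail : (B ++ v :: A).Pairwise fun x y => v = y → v < x := by
    refine List.pairwise_append.2 ⟨?_, List.pairwise_cons.2 ⟨?_, ?_⟩, fun x hx _ _ _ => hB x hx⟩
    · exact List.pairwise_of_forall_mem_list fun x hx _ _ _ => hB x hx
    · exact fun y hy hvy => absurd (hvy ▸ hy) hvA
    · exact List.pairwise_of_forall_mem_list fun _ _ y hy hvy => absurd (hvy ▸ hy) hvA
  refine List.triplewise_cons.2 ⟨hvtail, List.triplewise_append.2
    ⟨hBs, List.triplewise_cons.2 ⟨?_, hAs⟩, fun b hb => List.pairwise_cons.2 ⟨?_, hBA b hb⟩,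
      List.forall_mem_cons.2 ⟨?_, hAB⟩⟩⟩
  · exact List.pairwise_of_forall_mem_list fun _ _ y hy hvy => absurd (hvy ▸ hy) hvA
  · exact fun y hy hby => absurd (hby ▸ hy) (hdisj b hb)
  · exact List.pairwise_of_forall_mem_list fun x hx _ _ hxv => absurd (hxv ▸ hx) hvB

-- A letter exceeding its successor cannot occur again later.
lemma IsStirling.stepCount_gt_le (h : IsStirling w) : stepCount (· > ·) w ≤ #w.toFinset := by
  induction w with
  | nil => exact Nat.zero_le _
  | cons a w ih =>
    have ih := ih (List.triplewise_cons.1 h).2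
    rw [stepCount, List.toFinset_cons]
    split_ifs with ha
    · rw [card_insert_of_notMem (mt List.mem_toFinset.1 (h.notMem_of_headD_lt ha)), add_comm]
      exact Nat.succ_le_succ ih
    · rw [zero_add]
      exact ih.trans (card_le_card (subset_insert _ _))

omit [OrderBot α] in
lemma IsStirlingPerm.toFinset_eq (h : IsStirlingPerm s w) : w.toFinset = s := by
  ext a
  rw [List.mem_toFinset, ← Multiset.mem_coe, h.coe_eq, Multiset.mem_nsmul_of_ne_zero two_ne_zero,
    Finset.mem_val]

omit [OrderBot α] in
lemma IsStirlingPerm.mem_of_cons (h : IsStirlingPerm s (v :: w)) : v ∈ s := by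
  rw [← h.toFinset_eq, List.mem_toFinset]
  exact List.mem_cons_self

end IsStirling

section InsertPair

variable {v : α} {A B w : List α}

lemma exists_append_of_notMem (hv : ⊥ < v) (hvw : v ∉ w) :
    ∃ B A, B ++ A = w ∧ (∀ b ∈ B, v < b) ∧ A.headD ⊥ < v := by
  refine ⟨w.takeWhile (v < ·), w.dropWhile (v < ·), List.takeWhile_append_dropWhile,
    fun b hb => by simpa using List.mem_takeWhile_imp hb, ?_⟩
  cases hA : w.dropWhile (v < ·) with
  | nil => exact hv
  | cons a A =>
    have hav : ¬ v < a := by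
      have := List.head_dropWhile_not (v < ·) (l := w) (by simp [hA])
      simpa [hA] using this
    have ha : a ∈ w := (List.dropWhile_sublist _).subset (hA ▸ List.mem_cons_self)
    exact lt_of_le_of_ne (not_lt.1 hav) fun h => hvw (h ▸ ha)

lemma insertPair_append (hB : ∀ b ∈ B, v < b) (hA : A.headD ⊥ < v) :
    insertPair v (B ++ A) = v :: (B ++ v :: A) := by
  have hB' : ∀ b ∈ B, decide (v < b) = true := fun b hb => decide_eq_true (hB b hb)
  have hA' : A.takeWhile (v < ·) = [] ∧ A.dropWhile (v < ·) = A := by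
    cases A with
    | nil => exact ⟨rfl, rfl⟩
    | cons a A => simp [(show a < v from hA).not_gt]
  rw [insertPair, List.takeWhile_append_of_pos hB', List.dropWhile_append_of_pos hB', hA'.1, hA'.2,
    List.append_nil]

omit [OrderBot α] in
lemma coe_insertPair (v : α) (w : List α) :
    (insertPair v w : Multiset α) = v ::ₘ v ::ₘ (w : Multiset α) := by
  rw [insertPair, Multiset.cons_coe, Multiset.cons_coe, Multiset.coe_eq_coe]
  exact (List.perm_middle.trans (by rw [List.takeWhile_append_dropWhile])).cons v

omit [OrderBot α] in
lemma insertPair_injective2 : Function.Injective2 (insertPair (α := α)) := by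
  have herase : ∀ (v : α) (w : List α), (insertPair v w).tail.erase v = w := fun v w => by
    have hv : v ∉ w.takeWhile (v < ·) := fun h => by simpa using List.mem_takeWhile_imp h
    rw [insertPair, List.tail_cons, List.erase_append_right _ hv, List.erase_cons_head,
      List.takeWhile_append_dropWhile]
  intro v v' w w' h
  obtain rfl : v = v' := (List.cons.inj h).1
  exact ⟨rfl, by rw [← herase v w, h, herase]⟩

lemma stepCount_gt_insertPair (hv : ⊥ < v) (hvw : v ∉ w) :
    stepCount (· > ·) (insertPair v w) = stepCount (· > ·) w + 1 := by
  obtain ⟨B, A, rfl, hB, hA⟩ := exists_append_of_notMem hv hvw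
  rw [insertPair_append hB hA, stepCount_gt_cons_append_cons hB, if_pos hA,
    stepCount_gt_append hB hA]

lemma stepCount_eq_insertPair (hv : ⊥ < v) (hvw : v ∉ w) :
    stepCount (· = ·) (insertPair v w) =
      stepCount (· = ·) w + if w.headD ⊥ < v then 1 else 0 := by
  obtain ⟨B, A, rfl, hB, hA⟩ := exists_append_of_notMem hv hvw
  have hhead : (B ++ A).headD ⊥ < v ↔ B = [] := by
    cases B with
    | nil => exact iff_of_true hA rfl
    | cons b B => exact iff_of_false (hB b List.mem_cons_self).not_gt (List.cons_ne_nil b B)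
  rw [insertPair_append hB hA, stepCount_eq_cons_append_cons hB hA, stepCount_eq_append hB hA]
  simp only [hhead]

lemma IsStirling.insertPair (h : IsStirling w) (hv : ⊥ < v) (hvw : v ∉ w) :
    IsStirling (insertPair v w) := by
  obtain ⟨B, A, rfl, hB, hA⟩ := exists_append_of_notMem hv hvw
  rw [insertPair_append hB hA]
  exact h.cons_append_cons hB hA fun hvA => hvw (List.mem_append_right B hvA)

end InsertPair

section Doubling

variable {s : Finset α} {l w : List α}

omit [OrderBot α] in
lemma doubling_cons (v : α) (l : List α) : doubling (v :: l) = insertPair v (doubling l) :=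
  rfl

omit [OrderBot α] in
lemma coe_doubling (l : List α) : (doubling l : Multiset α) = 2 • (l : Multiset α) := by
  induction l with
  | nil => rfl
  | cons v l ih =>
    rw [doubling_cons, coe_insertPair, ih, ← Multiset.cons_coe, two_nsmul,
      two_nsmul, Multiset.cons_add, Multiset.add_cons]

omit [OrderBot α] in
lemma mem_doubling {a : α} : a ∈ doubling l ↔ a ∈ l := by
  rw [← Multiset.mem_coe, coe_doubling, Multiset.mem_nsmul_of_ne_zero two_ne_zero,
    Multiset.mem_coe]

omit [OrderBot α] in
lemma headD_doubling (l : List α) (a : α) : (doubling l).headD a = l.headD a := by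
  cases l <;> rfl

omit [OrderBot α] in
lemma doubling_injective : Function.Injective (doubling (α := α)) := by
  intro l
  induction l with
  | nil =>
    rintro (_ | ⟨v, l⟩) h
    · rfl
    · cases h
  | cons v l ih =>
    rintro (_ | ⟨v', l'⟩) h
    · cases h
    · obtain ⟨rfl, hl⟩ := insertPair_injective2 h
      rw [ih hl]

lemma stepCount_gt_doubling (hl : l.Nodup) (hbot : ⊥ ∉ l) :
    stepCount (· > ·) (doubling l) = l.length := by
  induction l with
  | nil => rfl
  | cons v l ih =>
    obtain ⟨hv, hl⟩ := List.nodup_cons.1 hl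
    rw [List.mem_cons, not_or] at hbot
    have hv0 : ⊥ < v := bot_lt_iff_ne_bot.2 (Ne.symm hbot.1)
    have hvl : v ∉ doubling l := mt mem_doubling.1 hv
    rw [doubling_cons, stepCount_gt_insertPair hv0 hvl, ih hl hbot.2, List.length_cons]

lemma stepCount_eq_doubling (hl : l.Nodup) (hbot : ⊥ ∉ l) :
    stepCount (· = ·) (doubling l) = stepCount (· > ·) l := by
  induction l with
  | nil => rfl
  | cons v l ih =>
    obtain ⟨hv, hl⟩ := List.nodup_cons.1 hl
    rw [List.mem_cons, not_or] at hbot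
    have hv0 : ⊥ < v := bot_lt_iff_ne_bot.2 (Ne.symm hbot.1)
    have hvl : v ∉ doubling l := mt mem_doubling.1 hv
    rw [doubling_cons, stepCount_eq_insertPair hv0 hvl, ih hl hbot.2, headD_doubling,
      stepCount, add_comm]

lemma isStirling_doubling (hl : l.Nodup) (hbot : ⊥ ∉ l) : IsStirling (doubling l) := by
  induction l with
  | nil => exact List.Triplewise.nil
  | cons v l ih =>
    obtain ⟨hv, hl⟩ := List.nodup_cons.1 hl
    rw [List.mem_cons, not_or] at hbot
    have hv0 : ⊥ < v := bot_lt_iff_ne_bot.2 (Ne.symm hbot.1)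
    have hvl : v ∉ doubling l := mt mem_doubling.1 hv
    exact (ih hl hbot.2).insertPair hv0 hvl

omit [OrderBot α] in
lemma IsStirlingPerm.of_cons_append_cons {v : α} {A B : List α}
    (h : IsStirlingPerm s (v :: (B ++ v :: A))) : IsStirlingPerm (s.erase v) (B ++ A) := by
  refine ⟨?_, h.isStirling.of_cons_append_cons⟩
  have hv : v ∈ s := h.mem_of_cons
  have hcons : v ::ₘ v ::ₘ ((B ++ A : List α) : Multiset α) =
      v ::ₘ v ::ₘ (2 • (s.erase v).val) := by
    calc v ::ₘ v ::ₘ ((B ++ A : List α) : Multiset α)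
        = ((v :: (B ++ v :: A) : List α) : Multiset α) := by
          rw [Multiset.cons_coe, Multiset.cons_coe, Multiset.coe_eq_coe]
          exact List.perm_middle.symm.cons v
      _ = 2 • (v ::ₘ (s.erase v).val) := by
          rw [h.coe_eq, Finset.erase_val, Multiset.cons_erase hv]
      _ = v ::ₘ v ::ₘ (2 • (s.erase v).val) := by
          rw [two_nsmul, two_nsmul, Multiset.cons_add, Multiset.add_cons]
  simpa only [Multiset.cons_inj_right] using hcons

omit [OrderBot α] in
lemma IsStirlingPerm.exists_eq_cons_append_cons {v : α} (h : IsStirlingPerm s (v :: w)) :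
    ∃ B A, w = B ++ v :: A := by
  refine List.append_of_mem ?_
  have hv : v ∈ s := h.mem_of_cons
  have hcount : (v :: w).count v = 2 := by
    rw [← Multiset.coe_count, h.coe_eq, Multiset.count_nsmul,
      Multiset.count_eq_one_of_mem s.nodup hv]
  rw [List.count_cons_self] at hcount
  exact List.count_pos_iff.1 (by lia)

/- Deleting the two copies of the first letter loses one distinct letter, so it must also lose a
descent, which can only be the one at the second copy. -/
lemma IsStirlingPerm.headD_lt_of_stepCount_gt_eq {v : α} {A B : List α}
    (h : IsStirlingPerm s (v :: (B ++ v :: A)))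
    (hd : stepCount (· > ·) (v :: (B ++ v :: A)) = #s) : A.headD ⊥ < v := by
  by_contra hA
  obtain ⟨hBs, hAs, -⟩ := List.triplewise_append.1 h.isStirling.of_cons_append_cons
  have hv : v ∈ s := h.mem_of_cons
  have hle : #s ≤ #(s.erase v) := calc
    #s = stepCount (· > ·) B + stepCount (· > ·) A := by
      rw [← hd, stepCount_gt_cons_append_cons fun b => h.isStirling.lt_of_cons_append_cons,
        if_neg hA, add_zero]
    _ ≤ #B.toFinset + #A.toFinset :=
      add_le_add (IsStirling.stepCount_gt_le hBs) (IsStirling.stepCount_gt_le hAs)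
    _ = #(s.erase v) := by
      rw [← card_union_of_disjoint h.isStirling.disjoint_of_cons_append_cons,
        ← List.toFinset_append, h.of_cons_append_cons.toFinset_eq]
  exact hle.not_gt (card_erase_lt_of_mem hv)

lemma IsStirlingPerm.exists_doubling_eq (h : IsStirlingPerm s w)
    (hd : stepCount (· > ·) w = #s) : ∃ l : List α, (l : Multiset α) = s.val ∧ doubling l = w := by
  induction hm : #s generalizing s w with
  | zero =>
    obtain rfl : s = ∅ := card_eq_zero.1 hm
    obtain rfl : w = [] := (List.toFinset_eq_empty_iff w).1 h.toFinset_eq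
    exact ⟨[], rfl, rfl⟩
  | succ m ih =>
    cases w with
    | nil => exact absurd (hd.trans hm) (Nat.succ_ne_zero m).symm
    | cons v w =>
      obtain ⟨B, A, rfl⟩ := h.exists_eq_cons_append_cons
      have hv : v ∈ s := h.mem_of_cons
      have hB : ∀ b ∈ B, v < b := fun b => h.isStirling.lt_of_cons_append_cons
      have hA : A.headD ⊥ < v := h.headD_lt_of_stepCount_gt_eq hd
      have hm' : #(s.erase v) = m := by rw [card_erase_of_mem hv, hm, Nat.add_sub_cancel]
      have hd' : stepCount (· > ·) (B ++ A) = #(s.erase v) := by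
        rw [stepCount_gt_cons_append_cons hB, if_pos hA, ← stepCount_gt_append hB hA, hm] at hd
        rw [hm', Nat.succ.inj hd]
      obtain ⟨l, hl, hlw⟩ := ih h.of_cons_append_cons hd' hm'
      refine ⟨v :: l, ?_, ?_⟩
      · rw [← Multiset.cons_coe, hl, Finset.erase_val, Multiset.cons_erase hv]
      · rw [doubling_cons, hlw, insertPair_append hB hA]

theorem isStirlingPerm_and_stepCount_gt_eq_card_iff (hs : ⊥ ∉ s) :
    IsStirlingPerm s w ∧ stepCount (· > ·) w = #s ↔
      ∃ l : List α, (l : Multiset α) = s.val ∧ doubling l = w := by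
  refine ⟨fun h => h.1.exists_doubling_eq h.2, ?_⟩
  rintro ⟨l, hl, rfl⟩
  have hnd : l.Nodup := Multiset.coe_nodup.1 (hl ▸ s.nodup)
  have hbot : ⊥ ∉ l := by rwa [← Multiset.mem_coe, hl]
  refine ⟨⟨by rw [coe_doubling, hl], isStirling_doubling hnd hbot⟩, ?_⟩
  rw [stepCount_gt_doubling hnd hbot, ← Multiset.coe_card, hl, Finset.card_val]

end Doubling

end Words

section Positions

lemma stepCount_reverse_ofFn {α : Type*} [LinearOrder α] [OrderBot α] (r : α → α → Prop)
    [DecidableRel r] {f : ℕ → α} (hf : f 0 = ⊥) (m : ℕ) :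
    stepCount r (List.ofFn fun i : Fin m => f (i + 1)).reverse =
      #{i ∈ Icc 1 m | r (f i) (f (i - 1))} := by
  have hhead (m : ℕ) : (List.ofFn fun i : Fin m => f (i + 1)).reverse.headD ⊥ = f m := by
    cases m with
    | zero => exact hf.symm
    | succ m => rw [List.ofFn_succ', List.concat_eq_append, List.reverse_concat]; rfl
  induction m with
  | zero => rfl
  | succ m ih =>
    simp only [card_filter] at ih ⊢
    rw [sum_Icc_succ_top (Nat.succ_pos m), ← ih, List.ofFn_succ', List.concat_eq_append,
      List.reverse_concat, stepCount, add_comm]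
    simp only [Fin.val_castSucc, hhead]
    rfl

lemma card_filter_Icc_succ {m : ℕ} {p : ℕ → Prop} [DecidablePred p] (hp : 1 ≤ m → ¬ p 1) :
    #{i ∈ Icc 1 (m - 1) | p (i + 1)} = #{i ∈ Icc 1 m | p i} := by
  rw [← card_map (s := filter _ (Icc 1 (m - 1))) (addRightEmbedding 1)]
  congr 1
  ext i
  simp only [mem_map, mem_filter, mem_Icc, addRightEmbedding_apply]
  constructor
  · rintro ⟨j, ⟨hj, hpj⟩, rfl⟩
    exact ⟨by lia, hpj⟩
  · rintro ⟨hi, hpi⟩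
    have hi1 : i ≠ 1 := by rintro rfl; exact hp hi.2 hpi
    obtain ⟨j, rfl⟩ := Nat.exists_eq_add_of_le' hi.1
    exact ⟨j, ⟨by lia, hpi⟩, rfl⟩

/-- The one-line notation of `σ`, read from right to left. -/
def stirlingWord {n : ℕ} (σ : Fin (2 * n) → Fin (n + 1)) : List ℕ :=
  (List.ofFn fun i => (σ i : ℕ)).reverse

/-- The one-line notation of `π` on the letters `1, …, n`, read from right to left. -/
def permWord {n : ℕ} (π : Equiv.Perm (Fin n)) : List ℕ :=
  (List.ofFn fun i => (π i : ℕ) + 1).reverse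

section Stirling

variable {n : ℕ} (σ : Fin (2 * n) → Fin (n + 1))

lemma sval_zero : sval σ 0 = 0 :=
  dif_neg fun h => Nat.not_succ_le_zero 0 h.1

lemma sval_succ (i : Fin (2 * n)) : sval σ (i + 1) = σ i :=
  dif_pos ⟨Nat.succ_pos i, i.isLt⟩

lemma stepCount_stirlingWord (r : ℕ → ℕ → Prop) [DecidableRel r] :
    stepCount r (stirlingWord σ) = #{i ∈ Icc 1 (2 * n) | r (sval σ i) (sval σ (i - 1))} := by
  rw [← stepCount_reverse_ofFn r (sval_zero σ)]
  simp only [sval_succ, stirlingWord]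

lemma count_stirlingWord (a : ℕ) : (stirlingWord σ).count a = #{i | (σ i : ℕ) = a} := by
  rw [stirlingWord, List.count_reverse, ← Multiset.coe_count, ← Fin.univ_val_map,
    Multiset.count_map]
  simp only [eq_comm (a := a)]
  rfl

lemma stirlingWord_injective :
    Function.Injective (stirlingWord : (Fin (2 * n) → Fin (n + 1)) → List ℕ) := fun _ _ h =>
  funext fun i => Fin.ext (congrFun (List.ofFn_injective (List.reverse_injective h)) i)

lemma isStirling_stirlingWord_iff :
    IsStirling (stirlingWord σ) ↔
      ∀ i j k : Fin (2 * n), i < j → j < k → σ i = σ k → σ i < σ j := by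
  rw [IsStirling, stirlingWord, List.triplewise_reverse, List.triplewise_iff_getElem]
  simp only [List.getElem_ofFn, List.length_ofFn, Fin.val_inj, Fin.val_fin_lt]
  constructor
  · intro h i j k hij hjk hik
    rw [hik]
    exact h i j k hij hjk k.isLt hik.symm
  · intro h i j k hij hjk hk hik
    rw [hik]
    exact h ⟨i, by lia⟩ ⟨j, by lia⟩ ⟨k, hk⟩ hij hjk hik.symm

lemma coe_stirlingWord_eq_iff :
    (stirlingWord σ : Multiset ℕ) = 2 • (Icc 1 n).val ↔
      ∀ v : Fin (n + 1), (v : ℕ) ≠ 0 → #{i | σ i = v} = 2 := by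
  have hcount (v : Fin (n + 1)) : (stirlingWord σ).count (v : ℕ) = #{i | σ i = v} := by
    simp only [count_stirlingWord, Fin.ext_iff]
  constructor
  · intro h v hv
    have hvn : (v : ℕ) ∈ Icc 1 n :=
      mem_Icc.2 ⟨Nat.one_le_iff_ne_zero.2 hv, Nat.lt_succ_iff.1 v.isLt⟩
    rw [← hcount, ← Multiset.coe_count, h, Multiset.count_nsmul,
      Multiset.count_eq_one_of_mem (Icc 1 n).nodup hvn]
  · intro h
    refine (Multiset.eq_of_le_of_card_le (Multiset.le_iff_count.2 fun a => ?_) ?_).symm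
    · rw [Multiset.count_nsmul, Multiset.count_eq_of_nodup (Icc 1 n).nodup]
      split_ifs with ha
      · rw [Finset.mem_val, mem_Icc] at ha
        rw [Multiset.coe_count, hcount ⟨a, Nat.lt_succ_iff.2 ha.2⟩,
          h _ (Nat.one_le_iff_ne_zero.1 ha.1)]
      · exact Nat.zero_le _
    · simp [stirlingWord]

lemma mem_StirlingSet_iff : σ ∈ StirlingSet n ↔ IsStirlingPerm (Icc 1 n) (stirlingWord σ) := by
  rw [StirlingSet, mem_filter_univ, ← coe_stirlingWord_eq_iff, ← isStirling_stirlingWord_iff]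
  exact ⟨fun h => ⟨h.1, h.2⟩, fun h => ⟨h.coe_eq, h.isStirling⟩⟩

lemma exists_stirlingWord_eq {w : List ℕ} (hw : (w : Multiset ℕ) = 2 • (Icc 1 n).val) :
    ∃ σ : Fin (2 * n) → Fin (n + 1), stirlingWord σ = w := by
  have hlen : w.length = 2 * n := by simpa using congrArg Multiset.card hw
  have hlt (i : Fin w.reverse.length) : w.reverse.get i < n + 1 := by
    have hmem : w.reverse.get i ∈ (w : Multiset ℕ) := List.mem_reverse.1 (List.get_mem _ i)
    rw [hw, Multiset.mem_nsmul_of_ne_zero two_ne_zero, Finset.mem_val, mem_Icc] at hmem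
    exact Nat.lt_succ_iff.2 hmem.2
  have hlen' : 2 * n = w.reverse.length := by rw [List.length_reverse, hlen]
  refine ⟨fun i => ⟨w.reverse.get (i.cast hlen'), hlt _⟩, ?_⟩
  rw [stirlingWord, List.reverse_eq_iff]
  conv_rhs => rw [← List.ofFn_get w.reverse, List.ofFn_congr hlen'.symm]

end Stirling

section Perm

variable {n : ℕ} (π : Equiv.Perm (Fin n))

lemma pval_zero : pval π 0 = 0 :=
  dif_neg fun h => Nat.not_succ_le_zero 0 h.1

lemma pval_succ (i : Fin n) : pval π (i + 1) = π i + 1 :=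
  dif_pos ⟨Nat.succ_pos i, i.isLt⟩

lemma coe_permWord : (permWord π : Multiset ℕ) = (Icc 1 n).val := by
  have hnodup : (permWord π).Nodup := List.nodup_reverse.2 <|
    List.nodup_ofFn_ofInjective fun i j h => π.injective (Fin.ext (Nat.succ_injective h))
  refine Multiset.eq_of_le_of_card_le
    ((Multiset.le_iff_subset (Multiset.coe_nodup.2 hnodup)).2 fun a ha => ?_) ?_
  · obtain ⟨i, rfl⟩ := List.mem_ofFn.1 (List.mem_reverse.1 ha)
    exact (mem_Icc.2 ⟨Nat.succ_pos _, Nat.succ_le_of_lt (π i).isLt⟩ : (π i : ℕ) + 1 ∈ Icc 1 n)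
  · simp [permWord]

lemma permWord_injective : Function.Injective (permWord (n := n)) := fun _ _ h =>
  Equiv.ext fun i => Fin.ext <| Nat.succ_injective <|
    congrFun (List.ofFn_injective (List.reverse_injective h)) i

lemma exists_permWord_eq {l : List ℕ} (hl : (l : Multiset ℕ) = (Icc 1 n).val) :
    ∃ π : Equiv.Perm (Fin n), permWord π = l := by
  have himage : univ.image (permWord (n := n)) = (List.range' 1 n).permutations.toFinset := by
    refine Finset.eq_of_subset_of_card_le ?_ ?_
    · simp only [image_subset_iff, mem_univ, List.mem_toFinset, List.mem_permutations,
        forall_const]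
      exact fun π => Multiset.coe_eq_coe.1 (coe_permWord π)
    · rw [card_image_of_injective _ permWord_injective, card_univ, Fintype.card_perm,
        Fintype.card_fin, List.toFinset_card_of_nodup (List.nodup_permutations _ List.nodup_range'),
        List.length_permutations, List.length_range']
  have hmem : l ∈ univ.image (permWord (n := n)) := by
    rw [himage, List.mem_toFinset, List.mem_permutations]
    exact Multiset.coe_eq_coe.1 hl
  simpa using hmem

lemma injOn_pval : Set.InjOn (pval π) (Icc 1 n) := by
  intro i hi j hj h
  rw [coe_Icc, Set.mem_Icc] at hi hj
  rw [pval, pval, dif_pos hi, dif_pos hj, Nat.add_right_cancel_iff, Fin.val_inj,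
    π.apply_eq_iff_eq, Fin.mk.injEq] at h
  lia

lemma stepCount_gt_permWord_add_pdes : stepCount (· > ·) (permWord π) + pdes π = n := by
  have hword : stepCount (· > ·) (permWord π) = #{i ∈ Icc 1 n | pval π i > pval π (i - 1)} := by
    rw [← stepCount_reverse_ofFn (· > ·) (pval_zero π)]
    simp only [pval_succ, permWord]
  have hpdes : pdes π = #{i ∈ Icc 1 n | ¬ pval π i > pval π (i - 1)} := by
    rw [← card_filter_Icc_succ fun h => ?_, pdes]
    · refine congrArg card (filter_congr fun i hi => ?_)
      rw [mem_Icc] at hi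
      have hne : pval π i ≠ pval π (i + 1) := fun h => (Nat.lt_succ_self i).ne <|
        injOn_pval π (by simp; lia) (by simp; lia) h
      simp only [Nat.add_sub_cancel, not_lt, gt_iff_lt]
      exact ⟨le_of_lt, fun h => lt_of_le_of_ne h hne.symm⟩
    · rw [not_not, Nat.sub_self, pval_zero, pval, dif_pos ⟨le_rfl, h⟩]
      exact Nat.succ_pos _
  rw [hword, hpdes, card_filter_add_card_filter_not, Nat.card_Icc, Nat.add_sub_cancel]

end Perm

end Positions

section Statistics

variable {n : ℕ} {σ : Fin (2 * n) → Fin (n + 1)} {i j k : ℕ}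

lemma sval_lt (h : σ ∈ StirlingSet n) (hi : 1 ≤ i) (hij : i < j) (hjk : j < k) (hk : k ≤ 2 * n)
    (hik : sval σ i = sval σ k) : sval σ i < sval σ j := by
  rw [sval, sval, dif_pos (by lia), dif_pos (by lia), Fin.val_inj] at hik
  rw [sval, sval, dif_pos (by lia), dif_pos (by lia), Fin.val_fin_lt]
  exact (mem_filter.1 h).2.2 _ ⟨j - 1, by lia⟩ _ (Fin.mk_lt_mk.2 (by lia))
    (Fin.mk_lt_mk.2 (by lia)) hik

lemma sval_mem_Icc (h : σ ∈ StirlingSet n) (hi : i ∈ Icc 1 (2 * n)) : sval σ i ∈ Icc 1 n := by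
  have hmem : sval σ i ∈ stirlingWord σ := by
    rw [sval, dif_pos (mem_Icc.1 hi), stirlingWord, List.mem_reverse, List.mem_ofFn]
    exact ⟨_, rfl⟩
  rwa [← ((mem_StirlingSet_iff σ).1 h).toFinset_eq, List.mem_toFinset]

lemma exists_ne_sval_eq (h : σ ∈ StirlingSet n) (hi : i ∈ Icc 1 (2 * n)) :
    ∃ j ∈ Icc 1 (2 * n), j ≠ i ∧ sval σ j = sval σ i := by
  obtain ⟨i, rfl⟩ : ∃ i' : Fin (2 * n), (i' : ℕ) + 1 = i := by
    rw [mem_Icc] at hi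
    exact ⟨⟨i - 1, by lia⟩, Nat.sub_add_cancel hi.1⟩
  have hpos : (σ i : ℕ) ≠ 0 := by
    have := mem_Icc.1 (sval_mem_Icc h hi)
    rw [sval_succ] at this
    lia
  obtain ⟨j, hj, hne⟩ := exists_mem_ne (((mem_filter.1 h).2.1 _ hpos).symm ▸ one_lt_two) i
  refine ⟨j + 1, by simp, by simpa [Fin.val_inj] using hne, ?_⟩
  rw [sval_succ, sval_succ, (mem_filter.1 hj).2]

lemma sval_ne_of_ascent (h : σ ∈ StirlingSet n) (hi : 1 ≤ i) (hij : i < j) (hj : j ≤ 2 * n)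
    (hasc : sval σ (j - 1) < sval σ j) : sval σ i ≠ sval σ j := by
  intro he
  have hne : i ≠ j - 1 := by rintro rfl; exact hasc.ne he
  have := sval_lt h hi (show i < j - 1 by lia) (by lia) hj he
  lia

lemma sval_ne_of_plateau (h : σ ∈ StirlingSet n) (hi : 1 ≤ i) (hij : i < j) (hj : j + 1 ≤ 2 * n)
    (hplat : sval σ j = sval σ (j + 1)) : sval σ i ≠ sval σ j := fun he =>
  (sval_lt h hi hij (Nat.lt_succ_self j) hj (he.trans hplat)).ne he

-- The letter reached by an ascent occurs for the first time, and its second copy is still to come.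
lemma sval_le_succ_of_ascent (h : σ ∈ StirlingSet n) (hi : i ∈ Icc 1 (2 * n))
    (hasc : sval σ (i - 1) < sval σ i) : i < 2 * n ∧ sval σ i ≤ sval σ (i + 1) := by
  obtain ⟨j, hj, hne, he⟩ := exists_ne_sval_eq h hi
  rw [mem_Icc] at hi hj
  have hij : i < j := lt_of_not_ge fun hji =>
    sval_ne_of_ascent h hj.1 (lt_of_le_of_ne hji hne) hi.2 hasc he
  refine ⟨hij.trans_le hj.2, ?_⟩
  rcases (Nat.succ_le_of_lt hij).eq_or_lt with rfl | hlt
  · exact he.ge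
  · exact (sval_lt h hi.1 (Nat.lt_succ_self i) hlt hj.2 he.symm).le

lemma lapQ_add_dascQ (h : σ ∈ StirlingSet n) :
    lapQ σ + dascQ σ = stepCount (· > ·) (stirlingWord σ) := by
  rw [stepCount_stirlingWord, lapQ, dascQ, ← card_union_of_disjoint]
  · congr 1
    ext i
    have hasc := sval_le_succ_of_ascent (i := i) h
    simp only [mem_union, mem_filter, mem_Icc] at hasc ⊢
    lia
  · exact disjoint_filter.2 fun i _ hlap hdasc => hdasc.2.ne hlap.2

lemma platQ_eq_stepCount (h : σ ∈ StirlingSet n) :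
    platQ σ = stepCount (· = ·) (stirlingWord σ) := by
  rw [stepCount_stirlingWord, ← card_filter_Icc_succ fun hn => ?_]
  · simp only [platQ, Nat.add_sub_cancel, eq_comm]
  · rw [Nat.sub_self, sval_zero]
    exact Nat.one_le_iff_ne_zero.1 (mem_Icc.1 (sval_mem_Icc h (left_mem_Icc.2 hn))).1

lemma lapQ_add_dpQ (h : σ ∈ StirlingSet n) : lapQ σ + dpQ σ = platQ σ := by
  rw [lapQ, dpQ, platQ, ← card_union_of_disjoint]
  · congr 1
    ext i
    simp only [mem_union, mem_filter, mem_Icc]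
    constructor
    · rintro (⟨hi, -, hplat⟩ | ⟨hi, -, hplat⟩) <;> exact ⟨by lia, hplat⟩
    · rintro ⟨hi, hplat⟩
      rcases hi.1.eq_or_lt with rfl | hi1
      · have hpos := (mem_Icc.1 (sval_mem_Icc h (i := 1) (mem_Icc.2 (by lia)))).1
        exact Or.inl ⟨hi, by rwa [Nat.sub_self, sval_zero], hplat⟩
      · have hne : sval σ (i - 1) ≠ sval σ i :=
          sval_ne_of_plateau h (by lia) (by lia) (by lia) hplat
        rcases hne.lt_or_gt with hlt | hgt
        · exact Or.inl ⟨hi, hlt, hplat⟩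
        · exact Or.inr ⟨by lia, hgt, hplat⟩
  · exact disjoint_left.2 fun i hlap hdp => (mem_filter.1 hlap).2.1.not_gt (mem_filter.1 hdp).2.1

-- A letter reached by an ascent or starting a plateau is at its first occurrence.
lemma injOn_sval (h : σ ∈ StirlingSet n) :
    Set.InjOn (sval σ) {i ∈ Icc 1 (2 * n) |
      sval σ (i - 1) < sval σ i ∨ i + 1 ≤ 2 * n ∧ sval σ i = sval σ (i + 1)} := by
  have hne {i j : ℕ} (hi : 1 ≤ i) (hij : i < j) (hj : j ≤ 2 * n)
      (hfirst : sval σ (j - 1) < sval σ j ∨ j + 1 ≤ 2 * n ∧ sval σ j = sval σ (j + 1)) :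
      sval σ i ≠ sval σ j :=
    hfirst.elim (sval_ne_of_ascent h hi hij hj) fun hplat =>
      sval_ne_of_plateau h hi hij hplat.1 hplat.2
  rintro i ⟨hi, hi'⟩ j ⟨hj, hj'⟩ he
  rw [mem_Icc] at hi hj
  rcases lt_trichotomy i j with hij | hij | hij
  · exact absurd he (hne hi.1 hij hj.2 hj')
  · exact hij
  · exact absurd he.symm (hne hj.1 hij hi.2 hi')

lemma stepCount_gt_add_dpQ_le (h : σ ∈ StirlingSet n) :
    stepCount (· > ·) (stirlingWord σ) + dpQ σ ≤ n := by
  rw [stepCount_stirlingWord, dpQ, ← card_union_of_disjoint]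
  · have hsub : ({i ∈ Icc 1 (2 * n) | sval σ i > sval σ (i - 1)} ∪ {i ∈ Icc 2 (2 * n - 1) |
        sval σ i < sval σ (i - 1) ∧ sval σ i = sval σ (i + 1)} : Finset ℕ) ⊆
        {i ∈ Icc 1 (2 * n) |
          sval σ (i - 1) < sval σ i ∨ i + 1 ≤ 2 * n ∧ sval σ i = sval σ (i + 1)} := by
      intro i hi
      simp only [mem_union, mem_filter, mem_Icc] at hi ⊢
      lia
    refine (card_le_card hsub).trans ?_
    have := card_le_card_of_injOn (t := Icc 1 n) (sval σ)
      (fun i hi => sval_mem_Icc h (mem_filter.1 hi).1) (by simpa using injOn_sval h)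
    simpa using this
  · exact disjoint_left.2 fun i hasc hdp => (mem_filter.1 hasc).2.not_gt (mem_filter.1 hdp).2.1

lemma lapQ_dascQ_dpQ_eq_iff (h : σ ∈ StirlingSet n) (hk : k ≤ n) :
    lapQ σ = n - k ∧ dascQ σ = k ∧ dpQ σ = 0 ↔
      stepCount (· > ·) (stirlingWord σ) = n ∧ stepCount (· = ·) (stirlingWord σ) = n - k := by
  have hasc := lapQ_add_dascQ h
  have hplat := (lapQ_add_dpQ h).trans (platQ_eq_stepCount h)
  have hle := stepCount_gt_add_dpQ_le h
  lia

end Statistics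

section Correspondence

variable {n : ℕ}

lemma isStirlingPerm_Icc_and_stepCount_gt_eq_iff {w : List ℕ} :
    IsStirlingPerm (Icc 1 n) w ∧ stepCount (· > ·) w = n ↔
      ∃ π : Equiv.Perm (Fin n), doubling (permWord π) = w := by
  have hbot : (⊥ : ℕ) ∉ Icc 1 n := fun h => Nat.not_succ_le_zero 0 (mem_Icc.1 h).1
  have hcard : #(Icc 1 n) = n := by rw [Nat.card_Icc, Nat.add_sub_cancel]
  have hiff := isStirlingPerm_and_stepCount_gt_eq_card_iff (w := w) hbot
  rw [hcard] at hiff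
  rw [hiff]
  constructor
  · rintro ⟨l, hl, rfl⟩
    obtain ⟨π, rfl⟩ := exists_permWord_eq hl
    exact ⟨π, rfl⟩
  · rintro ⟨π, rfl⟩
    exact ⟨permWord π, coe_permWord π, rfl⟩

lemma stepCount_eq_doubling_permWord_add_pdes (π : Equiv.Perm (Fin n)) :
    stepCount (· = ·) (doubling (permWord π)) + pdes π = n := by
  have hnodup : (permWord π).Nodup := Multiset.coe_nodup.1 (coe_permWord π ▸ (Icc 1 n).nodup)
  have hbot : ⊥ ∉ permWord π := by
    rw [← Multiset.mem_coe, coe_permWord, Finset.mem_val, mem_Icc]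
    exact fun h => Nat.not_succ_le_zero 0 h.1
  rw [stepCount_eq_doubling hnodup hbot, stepCount_gt_permWord_add_pdes]

end Correspondence

theorem statement_19 (n k : ℕ) (hn : 1 ≤ n) (hk : k ≤ n - 1) :
    gammaNum n (n - k) k = eulerianNum n k := by
  have hkn : k ≤ n := hk.trans (Nat.sub_le n 1)
  rw [gammaNum, eulerianNum, ← card_image_of_injective _ stirlingWord_injective,
    ← card_image_of_injective _ (doubling_injective.comp permWord_injective)]
  congr 1
  ext w
  simp only [mem_image, mem_filter, mem_univ, true_and, Function.comp_apply]
  constructor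
  · rintro ⟨σ, ⟨hσ, hstat⟩, rfl⟩
    obtain ⟨hdesc, hplat⟩ := (lapQ_dascQ_dpQ_eq_iff hσ hkn).1 hstat
    have hperm := (mem_StirlingSet_iff σ).1 hσ
    obtain ⟨π, hπ⟩ := isStirlingPerm_Icc_and_stepCount_gt_eq_iff.1 ⟨hperm, hdesc⟩
    have hdes := stepCount_eq_doubling_permWord_add_pdes π
    rw [hπ, hplat] at hdes
    exact ⟨π, by lia, hπ⟩
  · rintro ⟨π, rfl, rfl⟩
    obtain ⟨hperm, hdesc⟩ := isStirlingPerm_Icc_and_stepCount_gt_eq_iff.2 ⟨π, rfl⟩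
    obtain ⟨σ, hσ⟩ := exists_stirlingWord_eq hperm.coe_eq
    have hdes := stepCount_eq_doubling_permWord_add_pdes π
    rw [← hσ] at hperm hdesc hdes
    have hmem := (mem_StirlingSet_iff σ).2 hperm
    exact ⟨σ, ⟨hmem, (lapQ_dascQ_dpQ_eq_iff hmem hkn).2 ⟨hdesc, by lia⟩⟩, hσ⟩
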